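/- Let π : X → Y be a submetry between metric spaces with X compact, and let ρ₀ ≥ 0 satisfy diam(π⁻¹(y)) ≤ 2ρ₀ for every y ∈ Y. For p ∈ X and t ∈ [0, ρ₀], define h_{p,t} ∈ C_b(X, ℝ) by h_{p,t}(z) = max(dist(p, z) − t, min(dist(p, z) + t, dist(π(p), π(z)) + ρ₀)). Then: (i) h_{p,0} = dist_p; (ii) h_{p,ρ₀}(z) = dist(π(p), π(z)) + ρ₀ for all z ∈ X; (iii) ‖h_{p,t} − dist_p‖_∞ ≤ t, so each h_{p,t} lies within distance ρ₀ of the image Φ(X) of the Kuratowski embedding; (iv) ‖h_{p,t} − h_{p',t'}‖_∞ ≤ dist(p, p') + |t − t'| for all p, p' ∈ X and t, t' ∈ [0, ρ₀], so (p, t) ↦ h_{p,t} is continuous. -/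

import Mathlib

open Metric BoundedContinuousFunction

/-- A submetry: a map between metric spaces sending every closed ball centered at `p`
of radius `r ≥ 0` onto the closed ball of the same radius centered at `π p`. -/
def IsSubmetry {X Y : Type*} [MetricSpace X] [MetricSpace Y] (π : X → Y) : Prop :=
  ∀ (p : X) (r : ℝ), 0 ≤ r → π '' Metric.closedBall p r = Metric.closedBall (π p) r

/-- The Kuratowski embedding of a compact metric space `X` into `C_b(X, ℝ)`. -/
noncomputable def distFun (X : Type*) [MetricSpace X] [CompactSpace X] (p : X) :
    BoundedContinuousFunction X ℝ :=
  .mkOfCompact ⟨fun z => dist p z, by fun_prop⟩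

/-- The mapping-cylinder homotopy of the Kuratowski embedding associated with a
submetry whose fibers have diameter at most `2ρ₀`: the family
`h_{p,t}(z) = max(dist p z − t, min(dist p z + t, dist (π p) (π z) + ρ₀))`
is well defined in `C_b(X, ℝ)`, starts at `dist_p`, ends at the lifted base distance
function translated by `ρ₀`, stays within distance `t ≤ ρ₀` of `Φ(X)`, and is
continuous in `(p, t)`. -/
theorem submetry_mapping_cylinder {X Y : Type*} [MetricSpace X] [CompactSpace X]
    [MetricSpace Y] (π : X → Y) (hπ : IsSubmetry π) (ρ₀ : ℝ) (hρ₀ : 0 ≤ ρ₀)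
    (hdiam : ∀ y : Y, Metric.diam (π ⁻¹' {y}) ≤ 2 * ρ₀) :
    ∃ h : X → ℝ → BoundedContinuousFunction X ℝ,
      (∀ (p : X) (t : ℝ) (z : X),
        h p t z = max (dist p z - t) (min (dist p z + t) (dist (π p) (π z) + ρ₀))) ∧
      (∀ p : X, h p 0 = distFun X p) ∧
      (∀ (p z : X), h p ρ₀ z = dist (π p) (π z) + ρ₀) ∧
      (∀ p : X, ∀ t ∈ Set.Icc (0 : ℝ) ρ₀, ‖h p t - distFun X p‖ ≤ t ∧
        Metric.infDist (h p t) (Set.range (distFun X)) ≤ ρ₀) ∧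
      (∀ (p p' : X), ∀ t ∈ Set.Icc (0 : ℝ) ρ₀, ∀ t' ∈ Set.Icc (0 : ℝ) ρ₀,
        ‖h p t - h p' t'‖ ≤ dist p p' + |t - t'|) := by
  have hlip : ∀ p z : X, dist (π p) (π z) ≤ dist p z := by
    intro p z
    have hz : π z ∈ π '' Metric.closedBall p (dist p z) :=
      ⟨z, by simp [Metric.mem_closedBall, dist_comm], rfl⟩
    rw [hπ p _ dist_nonneg, Metric.mem_closedBall] at hz
    rw [dist_comm]
    exact hz
  have hup : ∀ p z : X, dist p z ≤ dist (π p) (π z) + 2 * ρ₀ := by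
    intro p z
    have hp : π p ∈ Metric.closedBall (π z) (dist (π p) (π z)) := by
      simp [Metric.mem_closedBall]
    rw [← hπ z _ dist_nonneg] at hp
    obtain ⟨w, hw, hwp⟩ := hp
    rw [Metric.mem_closedBall] at hw
    have hb : Bornology.IsBounded (π ⁻¹' {π p}) :=
      isCompact_univ.isBounded.subset (Set.subset_univ _)
    have h1 : dist p w ≤ Metric.diam (π ⁻¹' {π p}) :=
      Metric.dist_le_diam_of_mem hb (by simp) (by simp [hwp])
    have h2 := hdiam (π p)
    have h3 := dist_triangle p w z
    linarith
  have hcont : Continuous π := by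
    refine (LipschitzWith.of_dist_le_mul (K := 1) ?_).continuous
    intro x y
    simpa using hlip x y
  let h : X → ℝ → BoundedContinuousFunction X ℝ := fun p t =>
    .mkOfCompact ⟨fun z => max (dist p z - t) (min (dist p z + t) (dist (π p) (π z) + ρ₀)),
      by fun_prop⟩
  have hh : ∀ (p : X) (t : ℝ) (z : X),
      h p t z = max (dist p z - t) (min (dist p z + t) (dist (π p) (π z) + ρ₀)) :=
    fun _ _ _ => rfl
  have hd : ∀ p z : X, distFun X p z = dist p z := fun _ _ => rfl
  have hnorm : ∀ p : X, ∀ t ∈ Set.Icc (0 : ℝ) ρ₀, ‖h p t - distFun X p‖ ≤ t := by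
    intro p t ht
    rw [BoundedContinuousFunction.norm_le ht.1]
    intro z
    have h0 := ht.1
    rw [BoundedContinuousFunction.sub_apply, hh, hd, Real.norm_eq_abs, abs_le]
    constructor
    · have := le_max_left (dist p z - t) (min (dist p z + t) (dist (π p) (π z) + ρ₀))
      linarith
    · have : max (dist p z - t) (min (dist p z + t) (dist (π p) (π z) + ρ₀)) ≤ dist p z + t :=
        max_le (by linarith) (min_le_left _ _)
      linarith
  refine ⟨h, hh, ?_, ?_, ?_, ?_⟩
  · intro p
    ext z
    rw [hh, hd]
    simp
  · intro p z
    rw [hh, min_eq_right (by linarith [hlip p z]), max_eq_right (by linarith [hup p z])]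
  · intro p t ht
    refine ⟨hnorm p t ht, ?_⟩
    refine (Metric.infDist_le_dist_of_mem (Set.mem_range_self p)).trans ?_
    rw [dist_eq_norm]
    exact (hnorm p t ht).trans ht.2
  · intro p p' t _ t' _
    rw [BoundedContinuousFunction.norm_le (by positivity)]
    intro z
    rw [BoundedContinuousFunction.sub_apply, hh, hh, Real.norm_eq_abs]
    have e1 : |dist p z - dist p' z| ≤ dist p p' := abs_dist_sub_le p p' z
    have e2 : |dist (π p) (π z) - dist (π p') (π z)| ≤ dist p p' :=
      (abs_dist_sub_le _ _ _).trans (hlip p p')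
    have e3 := abs_nonneg (t - t')
    refine (abs_max_sub_max_le_max _ _ _ _).trans (max_le ?_ ?_)
    · rw [abs_le] at *
      constructor <;> linarith [le_abs_self (t - t'), neg_abs_le (t - t')]
    · refine (abs_min_sub_min_le_max _ _ _ _).trans (max_le ?_ ?_)
      · rw [abs_le] at *
        constructor <;> linarith [le_abs_self (t - t'), neg_abs_le (t - t')]
      · rw [add_sub_add_right_eq_sub]
        linarith
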